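/- (Truthfulness of the prioritized egalitarian mechanism.) Fix a priority order σ and MRF valuations f_1,…,f_n on a finite item set M. Let v be an agent and let f'_v be any MRF valuation on M. If A is a non-redundant σ-Lorenz dominating allocation for the profile (f_1,…,f_n), and A' is a non-redundant σ-Lorenz dominating allocation for the profile in which f_v is replaced by f'_v (other valuations unchanged), then f_v(A_v) ≥ f_v(A'_v). In particular, any mechanism that outputs a non-redundant σ-Lorenz dominating allocation for the reported MRF valuations gives every agent weakly higher true value under truthful reporting than under any MRF misreport. -/

import Mathlib

open Finset
open scoped Classical

variable {n : ℕ} {I : Type*} [DecidableEq I] [Fintype I]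

/-- An allocation assigns pairwise disjoint bundles of items to the agents
(items may remain unallocated). -/
def IsAllocation (A : Fin n → Finset I) : Prop :=
  ∀ i j : Fin n, i ≠ j → Disjoint (A i) (A j)

/-- The vector of utilities of an allocation under a profile of valuations. -/
def util {α : Type*} (f : Fin n → Finset I → α) (A : Fin n → Finset I) : Fin n → α :=
  fun i => f i (A i)

/-- The entries of the vector `u`, sorted in nondecreasing order. -/
noncomputable def sortedVec {α : Type*} [LinearOrder α] (u : Fin n → α) : List α :=
  (Finset.univ.val.map u).sort (· ≤ ·)

/-- `u` Lorenz-dominates `v`: for each `k`, the sum of the `k` smallest entries of `u`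
is at least the sum of the `k` smallest entries of `v`. -/
def LorenzGE {α : Type*} [LinearOrder α] [AddCommMonoid α] (u v : Fin n → α) : Prop :=
  ∀ k : ℕ, ((sortedVec v).take k).sum ≤ ((sortedVec u).take k).sum

/-- A matroid rank function: a normalized submodular valuation with dichotomous marginals. -/
structure IsMRF (f : Finset I → ℕ) : Prop where
  empty : f ∅ = 0
  submod : ∀ S T : Finset I, S ⊆ T → ∀ a : I,
      f (insert a T) + f S ≤ f (insert a S) + f T
  dichot : ∀ (S : Finset I) (a : I), f (insert a S) = f S ∨ f (insert a S) = f S + 1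

/-- Non-redundancy: removing any item from any agent's bundle strictly decreases its value. -/
def NonRedundant (f : Fin n → Finset I → ℕ) (A : Fin n → Finset I) : Prop :=
  ∀ i : Fin n, ∀ a ∈ A i, f i ((A i).erase a) < f i (A i)

/-- A Lorenz dominating allocation. -/
def LorenzDominating (f : Fin n → Finset I → ℕ) (A : Fin n → Finset I) : Prop :=
  ∀ B : Fin n → Finset I, IsAllocation B → LorenzGE (util f A) (util f B)

/-- The σ-perturbed utilities: agent `i` gets `f i (A i) + σ(i)/n²`, where the priority
`σ(i)` ranges over `{1,…,n}`. -/
noncomputable def pUtil (σ : Equiv.Perm (Fin n)) (f : Fin n → Finset I → ℕ)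
    (A : Fin n → Finset I) : Fin n → ℝ :=
  fun i => (f i (A i) : ℝ) + (((σ i : ℕ) : ℝ) + 1) / (n : ℝ) ^ 2

/-- A σ-Lorenz dominating allocation. -/
def SigmaLorenzDom (σ : Equiv.Perm (Fin n)) (f : Fin n → Finset I → ℕ)
    (A : Fin n → Finset I) : Prop :=
  ∀ B : Fin n → Finset I, IsAllocation B → LorenzGE (pUtil σ f A) (pUtil σ f B)

/-- Restriction of a valuation to a subset `D` of the items. -/
def restrictVal (f : Finset I → ℕ) (D : Finset I) : Finset I → ℕ := fun S => f (S ∩ D)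

/-- A partition of all the items into `n` (possibly empty) bundles. -/
def IsPartition (P : Fin n → Finset I) : Prop :=
  (∀ i j : Fin n, i ≠ j → Disjoint (P i) (P j)) ∧ ∀ a : I, ∃ j, a ∈ P j

/-- An XOS valuation: the pointwise maximum of a finite nonempty family of
nonnegative additive valuations. -/
def IsXOS (f : Finset I → ℝ) : Prop :=
  ∃ (k : ℕ) (w : Fin (k + 1) → I → ℝ),
    (∀ t a, 0 ≤ w t a) ∧
    ∀ S : Finset I, f S = Finset.univ.sup' Finset.univ_nonempty (fun t => ∑ a ∈ S, w t a)

/-- A dichotomous valuation (real-valued version). -/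
def IsDichotomousR (f : Finset I → ℝ) : Prop :=
  ∀ (S : Finset I) (a : I), f (insert a S) = f S ∨ f (insert a S) = f S + 1

/-- Envy-freeness up to one good. -/
def EF1 (f : Fin n → Finset I → ℝ) (A : Fin n → Finset I) : Prop :=
  ∀ i j : Fin n, f i (A j) ≤ f i (A i) ∨ ∃ e ∈ A j, f i ((A j).erase e) ≤ f i (A i)

/-- The maximum welfare attainable by a set `S` of agents. -/
noncomputable def maxWelfare (f : Fin n → Finset I → ℕ) (S : Finset (Fin n)) : ℕ :=
  Finset.sup (Finset.univ.filter fun B : Fin n → Finset I => IsAllocation B)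
    (fun B => ∑ j ∈ S, f j (B j))

/-- An allocation extended with index `none` for the set of unallocated items. -/
def extAlloc (A : Fin n → Finset I) : Option (Fin n) → Finset I
  | none => Finset.univ \ Finset.univ.biUnion A
  | some i => A i

/-- Clipping every entry at `t` gives a sum bounded by keeping the first `k` entries and
replacing the others by `t`. -/
lemma sum_map_min_le_take (t : ℝ) (L : List ℝ) (k : ℕ) :
    (L.map (fun x => min x t)).sum ≤ (L.take k).sum + (L.drop k).length * t := by
  induction L generalizing k with
  | nil => simp
  | cons x L ih =>
    cases k with
    | zero =>
      have h := ih 0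
      simp only [List.take_zero, List.drop_zero, List.sum_nil, List.map_cons, List.sum_cons,
        List.length_cons] at h ⊢
      push_cast
      linarith [min_le_right x t]
    | succ k =>
      have h := ih k
      simp only [List.map_cons, List.sum_cons, List.take_succ_cons, List.drop_succ_cons]
      linarith [min_le_left x t]

/-- For a sorted list the bound `sum_map_min_le_take` is attained. -/
lemma exists_sum_map_min_eq_take (t : ℝ) (L : List ℝ) (hL : L.Pairwise (· ≤ ·)) :
    ∃ k, (L.map (fun x => min x t)).sum = (L.take k).sum + (L.drop k).length * t := by
  induction L with
  | nil => exact ⟨0, by simp⟩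
  | cons x L ih =>
    rw [List.pairwise_cons] at hL
    by_cases hx : x ≤ t
    · obtain ⟨k, hk⟩ := ih hL.2
      refine ⟨k + 1, ?_⟩
      simp only [List.map_cons, List.sum_cons, List.take_succ_cons, List.drop_succ_cons, hk,
        min_eq_left hx]
      ring
    · refine ⟨0, ?_⟩
      have hconst : (x :: L).map (fun y => min y t) = (x :: L).map (fun _ => t) := by
        refine List.map_congr_left fun y hy => ?_
        rcases List.mem_cons.1 hy with rfl | hy
        · exact min_eq_right (not_le.1 hx).le
        · exact min_eq_right ((not_le.1 hx).le.trans (hL.1 y hy))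
      rw [hconst]
      simp [add_mul, add_comm]

lemma sum_map_sortedVec (u : Fin n → ℝ) (g : ℝ → ℝ) :
    ((sortedVec u).map g).sum = ∑ i, g (u i) := by
  have h : (((sortedVec u : List ℝ) : Multiset ℝ).map g).sum
      = ((Finset.univ.val.map u).map g).sum := by
    rw [sortedVec, Multiset.sort_eq]
  rw [Multiset.map_coe, Multiset.sum_coe] at h
  rw [h, Multiset.map_map]
  rfl

lemma length_sortedVec (u : Fin n → ℝ) : (sortedVec u).length = n := by
  simp [sortedVec]

lemma LorenzGE.sum_min_le {u w : Fin n → ℝ} (h : LorenzGE u w) (t : ℝ) :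
    ∑ i, min (w i) t ≤ ∑ i, min (u i) t := by
  obtain ⟨k, hk⟩ := exists_sum_map_min_eq_take t (sortedVec u) (Multiset.pairwise_sort _ _)
  have hle := sum_map_min_le_take t (sortedVec w) k
  rw [sum_map_sortedVec u (fun x => min x t)] at hk
  rw [sum_map_sortedVec w (fun x => min x t)] at hle
  rw [List.length_drop, length_sortedVec] at hk hle
  linarith [h k]

namespace IsMRF

variable {g : Finset I → ℕ}

lemma le_insert (hg : IsMRF g) (S : Finset I) (a : I) : g S ≤ g (insert a S) := by
  rcases hg.dichot S a with h | h <;> omega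

lemma insert_le (hg : IsMRF g) (S : Finset I) (a : I) : g (insert a S) ≤ g S + 1 := by
  rcases hg.dichot S a with h | h <;> omega

lemma le_union (hg : IsMRF g) (S T : Finset I) : g S ≤ g (T ∪ S) := by
  induction T using Finset.induction_on with
  | empty => simp
  | insert a T _ ih => rw [insert_union]; exact ih.trans (hg.le_insert _ a)

lemma union_le (hg : IsMRF g) (S T : Finset I) : g (T ∪ S) ≤ g S + T.card := by
  induction T using Finset.induction_on with
  | empty => simp
  | insert a T ha ih =>
    rw [insert_union, card_insert_of_notMem ha]
    linarith [hg.insert_le (T ∪ S) a]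

lemma le_card (hg : IsMRF g) (S : Finset I) : g S ≤ S.card := by
  have h := hg.union_le ∅ S
  rwa [union_empty, hg.empty, zero_add] at h

/-- Subsets of independent sets are independent. -/
lemma eq_card_of_subset (hg : IsMRF g) {S T : Finset I} (hS : g S = S.card) (hTS : T ⊆ S) :
    g T = T.card := by
  have h := hg.union_le T (S \ T)
  rw [sdiff_union_of_subset hTS, hS] at h
  have hc := card_sdiff_add_card_eq_card hTS
  exact le_antisymm (hg.le_card T) (by omega)

/-- A set all of whose elements are essential to its value is independent. -/
lemma eq_card_of_erase_lt (hg : IsMRF g) {S : Finset I} (hS : ∀ a ∈ S, g (S.erase a) < g S) :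
    g S = S.card := by
  have key : ∀ T ⊆ S, g T = T.card := by
    intro T
    induction T using Finset.induction_on with
    | empty => intro _; simp [hg.empty]
    | insert a T ha ih =>
      intro hT
      have haS : a ∈ S := hT (mem_insert_self a T)
      have hTS : T ⊆ S := (subset_insert a T).trans hT
      have hsub := hg.submod T (S.erase a) (subset_erase.2 ⟨hTS, ha⟩) a
      rw [insert_erase haS] at hsub
      have := hS a haS
      have := ih hTS
      have := hg.insert_le T a
      rw [card_insert_of_notMem ha]
      omega
  exact key S Subset.rfl

/-- Every set contains an independent subset of the same value. -/
lemma exists_subset_eq_card (hg : IsMRF g) (S : Finset I) :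
    ∃ T ⊆ S, g T = T.card ∧ T.card = g S := by
  induction S using Finset.strongInduction with
  | H S ih =>
    by_cases hS : ∀ a ∈ S, g (S.erase a) < g S
    · have h := hg.eq_card_of_erase_lt hS
      exact ⟨S, Subset.rfl, h, h.symm⟩
    · push Not at hS
      obtain ⟨a, ha, hle⟩ := hS
      obtain ⟨T, hT, hgT, hcard⟩ := ih _ (erase_ssubset ha)
      have hmono := hg.le_insert (S.erase a) a
      rw [insert_erase ha] at hmono
      exact ⟨T, hT.trans (erase_subset a S), hgT, by omega⟩

/-- The augmentation property of independent sets. -/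
lemma exists_insert_eq_card (hg : IsMRF g) {S T : Finset I} (hS : g S = S.card)
    (hT : g T = T.card) (hlt : S.card < T.card) :
    ∃ a ∈ T, a ∉ S ∧ g (insert a S) = (insert a S).card := by
  by_contra hno
  push Not at hno
  have hspan : ∀ U ⊆ T, g (U ∪ S) = g S := by
    intro U
    induction U using Finset.induction_on with
    | empty => simp
    | insert a U _ ih =>
      intro hU
      have hUS := ih ((subset_insert a U).trans hU)
      have hsub := hg.submod S (U ∪ S) subset_union_right a
      have hmono := hg.le_insert (U ∪ S) a
      have hstep : g (insert a S) = g S := by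
        by_cases ha : a ∈ S
        · rw [insert_eq_of_mem ha]
        · refine (hg.dichot S a).resolve_right fun h => ?_
          refine hno a (hU (mem_insert_self a U)) ha ?_
          rw [h, card_insert_of_notMem ha, hS]
      rw [insert_union]
      omega
  have h₁ := hspan T Subset.rfl
  have h₂ := hg.le_union T S
  rw [union_comm] at h₂
  omega

end IsMRF

/-- An allocation in which each agent receives an independent set of items. -/
def IsIndepAllocation (f : Fin n → Finset I → ℕ) (B : Fin n → Finset I) : Prop :=
  IsAllocation B ∧ ∀ i, f i (B i) = (B i).card

/-- Give item `a` to agent `w`, taking it from its current owner, if any. -/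
def moveItem (B : Fin n → Finset I) (w : Fin n) (a : I) : Fin n → Finset I :=
  fun i => if i = w then insert a (B i) else (B i).erase a

lemma IsIndepAllocation.move {f : Fin n → Finset I → ℕ} (hf : ∀ i, IsMRF (f i))
    {B : Fin n → Finset I} (hB : IsIndepAllocation f B) {w : Fin n} {a : I}
    (ha : f w (insert a (B w)) = (insert a (B w)).card) :
    IsIndepAllocation f (moveItem B w a) := by
  refine ⟨fun i j hij => ?_, fun i => ?_⟩
  · have hd := hB.1 i j hij
    rw [Finset.disjoint_left] at hd ⊢
    intro b hbi hbj
    have := @hd b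
    unfold moveItem at hbi hbj
    split_ifs at hbi hbj <;> grind
  · unfold moveItem
    split_ifs with h
    · subst h; exact ha
    · exact (hf i).eq_card_of_subset (hB.2 i) (erase_subset _ _)

/-- The exchange property of utility vectors of independent allocations: if agent `w` receives
more in `C` than in `B`, then `w` can be given one more item, either at nobody's expense or at
the expense of an agent who receives more in `B` than in `C`. -/
lemma IsIndepAllocation.exchange {f : Fin n → Finset I → ℕ} (hf : ∀ i, IsMRF (f i))
    {C : Fin n → Finset I} (hC : IsIndepAllocation f C)
    {B : Fin n → Finset I} (hB : IsIndepAllocation f B)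
    {w : Fin n} (hw : (B w).card < (C w).card) :
    ∃ B', IsIndepAllocation f B' ∧
      ((∀ i, (B' i).card = (B i).card + if i = w then 1 else 0) ∨
        ∃ j, (C j).card < (B j).card ∧ ∀ i, (B' i).card + (if i = j then 1 else 0)
          = (B i).card + if i = w then 1 else 0) := by
  induction hm : ∑ i, (C i \ B i).card using Nat.strong_induction_on generalizing B w with
  | _ m ih =>
  subst hm
  obtain ⟨a, haC, haB, ha⟩ := (hf w).exists_insert_eq_card (hB.2 w) (hC.2 w) hw
  have hmove := hB.move hf ha
  by_cases hown : ∃ k, a ∈ B k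
  · obtain ⟨k, hk⟩ := hown
    have hkw : k ≠ w := by rintro rfl; exact haB hk
    have huniq : ∀ i, a ∈ B i → i = k := fun i hi => by
      by_contra hik
      exact Finset.disjoint_left.1 (hB.1 i k hik) hi hk
    have hcard : ∀ i, (moveItem B w a i).card + (if i = k then 1 else 0)
        = (B i).card + if i = w then 1 else 0 := by
      intro i
      unfold moveItem
      by_cases hiw : i = w
      · subst hiw
        simp [haB, Ne.symm hkw]
      · by_cases hik : i = k
        · subst hik
          simp [hiw, card_erase_add_one hk]
        · have : a ∉ B i := fun h => hik (huniq i h)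
          simp [hiw, hik, erase_eq_of_notMem this]
    by_cases hCk : (C k).card < (B k).card
    · exact ⟨_, hmove, Or.inr ⟨k, hCk, hcard⟩⟩
    have hlt : ∑ i, (C i \ moveItem B w a i).card < ∑ i, (C i \ B i).card := by
      refine Finset.sum_lt_sum (fun i _ => card_le_card fun b hb => ?_) ⟨w, mem_univ w, ?_⟩
      · by_cases hiw : i = w
        · subst hiw
          simp only [moveItem, if_true, mem_sdiff, mem_insert] at hb ⊢
          tauto
        · have haCi : a ∉ C i := fun h => Finset.disjoint_left.1 (hC.1 i w hiw) h haC
          simp only [moveItem, hiw, if_false, mem_sdiff, mem_erase] at hb ⊢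
          refine ⟨hb.1, fun hbB => hb.2 ⟨?_, hbB⟩⟩
          rintro rfl
          exact haCi hb.1
      · refine card_lt_card (Finset.ssubset_iff_of_subset ?_ |>.2 ⟨a, ?_, ?_⟩)
        · exact sdiff_subset_sdiff Subset.rfl (by simp [moveItem])
        · simp [haC, haB]
        · simp [moveItem]
    have hk₁ := hcard k
    simp only [if_true, hkw, if_false] at hk₁
    obtain ⟨B', hB', hcase⟩ := ih _ hlt hmove (w := k) (by omega) rfl
    refine ⟨B', hB', ?_⟩
    rcases hcase with h | ⟨j, hj, h⟩
    · exact Or.inl fun i => (h i).trans (hcard i)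
    · refine Or.inr ⟨j, ?_, fun i => (h i).trans (hcard i)⟩
      have hcj := hcard j
      by_cases hjw : j = w
      · subst hjw
        simp only [if_true, Ne.symm hkw, if_false] at hcj
        omega
      · simp only [hjw, if_false] at hcj
        omega
  · push Not at hown
    refine ⟨_, hmove, Or.inl fun i => ?_⟩
    unfold moveItem
    by_cases hiw : i = w
    · subst hiw
      simp [haB]
    · simp [hiw, erase_eq_of_notMem (hown i)]

/-- Perturbed utilities of distinct agents never differ by exactly one. -/
lemma pUtil_ne_add_one (σ : Equiv.Perm (Fin n)) (f : Fin n → Finset I → ℕ)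
    (A : Fin n → Finset I) {i k : Fin n} (hik : i ≠ k) : pUtil σ f A k ≠ pUtil σ f A i + 1 := by
  intro h
  have hn : 0 < n := i.pos
  have hn' : ((n : ℝ) ^ 2) ≠ 0 := by positivity
  unfold pUtil at h
  field_simp at h
  have hz : ((f k (A k) : ℤ) - f i (A i) - 1) * (n : ℤ) ^ 2
      = ((σ i : ℕ) : ℤ) - ((σ k : ℕ) : ℤ) := by
    have : (((f k (A k) : ℝ)) - f i (A i) - 1) * (n : ℝ) ^ 2
      = ((σ i : ℕ) : ℝ) - ((σ k : ℕ) : ℝ) := by linarith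
    exact_mod_cast this
  have hi := (σ i).isLt
  have hk := (σ k).isLt
  have hzero : ((σ i : ℕ) : ℤ) - ((σ k : ℕ) : ℤ) = 0 := by
    refine Int.eq_zero_of_abs_lt_dvd (m := (n : ℤ) ^ 2) ⟨_, hz.symm.trans (mul_comm _ _)⟩ ?_
    rw [abs_lt]
    constructor <;> nlinarith
  exact hik (σ.injective (Fin.ext (by omega)))

/-- A σ-Lorenz dominating allocation admits no alternative that raises agent `i` by one while
lowering the total of the others, clipped at the new level of `i`, by less than one. -/
lemma SigmaLorenzDom.false_of_gain {σ : Equiv.Perm (Fin n)} {f : Fin n → Finset I → ℕ}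
    {A B : Fin n → Finset I} (hLD : SigmaLorenzDom σ f A) (hB : IsAllocation B) {i k : Fin n}
    {c : ℝ} (hc : c < 1)
    (h : ∀ j, min (pUtil σ f A j) (pUtil σ f A i + 1) + (if j = i then 1 else 0)
      ≤ min (pUtil σ f B j) (pUtil σ f A i + 1) + if j = k then c else 0) : False := by
  have hle := (hLD B hB).sum_min_le (pUtil σ f A i + 1)
  have hsum := Finset.sum_le_sum fun j (_ : j ∈ Finset.univ) => h j
  simp only [Finset.sum_add_distrib, Finset.sum_ite_eq', mem_univ, if_true] at hsum
  linarith

lemma pUtil_add_of_card {σ : Equiv.Perm (Fin n)} {f : Fin n → Finset I → ℕ}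
    {A B : Fin n → Finset I} (hA : IsIndepAllocation f A) (hB : IsIndepAllocation f B)
    {j : Fin n} {a b : ℕ} (h : (B j).card + b = (A j).card + a) :
    pUtil σ f B j + b = pUtil σ f A j + a := by
  have h' : ((B j).card : ℝ) + b = (A j).card + a := by exact_mod_cast h
  simp only [pUtil, hA.2 j, hB.2 j]
  linarith

/-- A σ-Lorenz dominating allocation maximizes welfare locally. -/
lemma SigmaLorenzDom.not_augment {σ : Equiv.Perm (Fin n)} {f : Fin n → Finset I → ℕ}
    {A B : Fin n → Finset I} (hLD : SigmaLorenzDom σ f A) (hA : IsIndepAllocation f A)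
    (hB : IsIndepAllocation f B) {i : Fin n}
    (h : ∀ j, (B j).card = (A j).card + if j = i then 1 else 0) : False := by
  refine hLD.false_of_gain hB.1 (i := i) (k := i) zero_lt_one fun j => ?_
  have hj := pUtil_add_of_card (σ := σ) hA hB (b := 0) (h j)
  by_cases hji : j = i
  · subst hji
    simp at hj
    simp [hj]
  · simp [hji] at hj
    simp [hji, hj]

/-- A σ-Lorenz dominating allocation admits no transfer towards a poorer agent. -/
lemma SigmaLorenzDom.lt_add_one {σ : Equiv.Perm (Fin n)} {f : Fin n → Finset I → ℕ}
    {A B : Fin n → Finset I} (hLD : SigmaLorenzDom σ f A) (hA : IsIndepAllocation f A)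
    (hB : IsIndepAllocation f B) {i k : Fin n} (hik : i ≠ k)
    (h : ∀ j, (B j).card + (if j = k then 1 else 0) = (A j).card + if j = i then 1 else 0) :
    pUtil σ f A k < pUtil σ f A i + 1 := by
  by_contra hge
  have hgt : pUtil σ f A i + 1 < pUtil σ f A k :=
    lt_of_le_of_ne (not_lt.1 hge) (pUtil_ne_add_one σ f A hik).symm
  refine hLD.false_of_gain hB.1 (i := i) (k := k)
    (c := pUtil σ f A i + 1 - min (pUtil σ f A k - 1) (pUtil σ f A i + 1)) ?_ fun j => ?_
  · have : pUtil σ f A i < min (pUtil σ f A k - 1) (pUtil σ f A i + 1) :=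
      lt_min (by linarith) (by linarith)
    linarith
  · have hj := pUtil_add_of_card (σ := σ) hA hB (h j)
    by_cases hji : j = i
    · subst hji
      simp [hik] at hj
      simp [hik, hj]
    · by_cases hjk : j = k
      · subst hjk
        have hBj : pUtil σ f B j = pUtil σ f A j - 1 := by
          simp [hji] at hj
          linarith
        simp [hji, hBj, min_eq_right hgt.le]
      · simp [hji, hjk] at hj
        simp [hji, hjk, hj]

/-- Combining exchange with optimality: if `w` receives more in `C` than in the σ-Lorenz
dominating `A`, some agent who receives more in `A` than in `C` is not richer than `w` after
one more item. -/
lemma SigmaLorenzDom.exists_lt {σ : Equiv.Perm (Fin n)} {f : Fin n → Finset I → ℕ}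
    (hf : ∀ i, IsMRF (f i)) {A C : Fin n → Finset I} (hLD : SigmaLorenzDom σ f A)
    (hA : IsIndepAllocation f A) (hC : IsIndepAllocation f C) {w : Fin n}
    (hw : (A w).card < (C w).card) :
    ∃ j, (C j).card < (A j).card ∧ pUtil σ f A j < pUtil σ f A w + 1 := by
  obtain ⟨B, hB, h | ⟨j, hj, h⟩⟩ := IsIndepAllocation.exchange hf hC hA hw
  · exact (hLD.not_augment hA hB h).elim
  · have hwj : w ≠ j := by rintro rfl; omega
    exact ⟨j, hj, hLD.lt_add_one hA hB hwj h⟩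

lemma IsIndepAllocation.update {f : Fin n → Finset I → ℕ} {B : Fin n → Finset I} {v : Fin n}
    {g : Finset I → ℕ} {S : Finset I} (hB : IsAllocation B)
    (hfB : ∀ i, i ≠ v → f i (B i) = (B i).card) (hS : S ⊆ B v) (hgS : g S = S.card) :
    IsIndepAllocation (Function.update f v g) (Function.update B v S) := by
  refine ⟨fun i j hij => ?_, fun i => ?_⟩
  · have hsub : ∀ i, Function.update B v S i ⊆ B i := by
      intro i
      by_cases hi : i = v
      · subst hi; simpa using hS
      · simp [hi]
    exact (hB i j hij).mono (hsub i) (hsub j)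
  · by_cases hi : i = v
    · subst hi; simpa using hgS
    · simpa [hi] using hfB i hi

lemma NonRedundant.isIndepAllocation {f : Fin n → Finset I → ℕ} (hf : ∀ i, IsMRF (f i))
    {A : Fin n → Finset I} (hA : IsAllocation A) (hNR : NonRedundant f A) :
    IsIndepAllocation f A :=
  ⟨hA, fun i => (hf i).eq_card_of_erase_lt (hNR i)⟩

/-- Truthfulness of the prioritized egalitarian mechanism: an agent with an MRF valuation
cannot gain (in true value) by reporting a different MRF valuation. -/
theorem PE_truthful
    {n : ℕ} {I : Type*} [DecidableEq I] [Fintype I]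
    (σ : Equiv.Perm (Fin n))
    (f : Fin n → Finset I → ℕ) (hf : ∀ i, IsMRF (f i))
    (v : Fin n) (f' : Finset I → ℕ) (hf' : IsMRF f')
    (A : Fin n → Finset I) (hA : IsAllocation A)
    (hNR : NonRedundant f A) (hLD : SigmaLorenzDom σ f A)
    (A' : Fin n → Finset I) (hA' : IsAllocation A')
    (hNR' : NonRedundant (Function.update f v f') A')
    (hLD' : SigmaLorenzDom σ (Function.update f v f') A') :
    f v (A' v) ≤ f v (A v) := by
  set f₁ := Function.update f v f' with hf₁
  have hmrf : ∀ i, IsMRF (f₁ i) := by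
    intro i
    by_cases hi : i = v
    · subst hi; simpa [hf₁] using hf'
    · simpa [hf₁, hi] using hf i
  have hI : IsIndepAllocation f A := hNR.isIndepAllocation hf hA
  have hI' : IsIndepAllocation f₁ A' := hNR'.isIndepAllocation hmrf hA'
  obtain ⟨S, hSA, hfS, hScard⟩ := (hf v).exists_subset_eq_card (A' v)
  have hC : IsIndepAllocation f (Function.update A' v S) := by
    have h := IsIndepAllocation.update (f := f) (g := f v) hA'
      (fun i hi => by simpa [hf₁, hi] using hI'.2 i) hSA hfS
    rwa [Function.update_eq_self] at h
  have hD : IsIndepAllocation f₁ (Function.update A v ∅) :=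
    IsIndepAllocation.update hA (fun i _ => hI.2 i) (empty_subset _) (by simp [hf'.empty])
  by_contra hlt
  have hvS : (A v).card < S.card := by rw [hScard, ← hI.2 v]; omega
  have hvA' : (A v).card + 1 ≤ (A' v).card := hvS.trans_le (card_le_card hSA)
  -- An agent gaining one item over the truthful outcome forces another agent to lose.
  have loser : ∀ w, (A w).card < (Function.update A' v S w).card →
      ∃ j, j ≠ v ∧ (A' j).card < (A j).card ∧ pUtil σ f A j < pUtil σ f A w + 1 := by
    intro w hw
    obtain ⟨j, hj, hlt⟩ := hLD.exists_lt hf hI hC hw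
    have hjv : j ≠ v := by
      rintro rfl
      rw [Function.update_self] at hj
      omega
    rw [Function.update_of_ne hjv] at hj
    exact ⟨j, hjv, hj, hlt⟩
  have compare : ∀ i (B B' : Fin n → Finset I) (g g' : Fin n → Finset I → ℕ),
      IsIndepAllocation g B → IsIndepAllocation g' B' → (B i).card + 1 ≤ (B' i).card →
      pUtil σ g B i + 1 ≤ pUtil σ g' B' i := by
    intro i B B' g g' hB hB' h
    have h' : ((B i).card : ℝ) + 1 ≤ (B' i).card := by exact_mod_cast h
    simp only [pUtil, hB.2 i, hB'.2 i]
    linarith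
  obtain ⟨j₀, hj₀v, hj₀, hj₀lt⟩ := loser v (by simpa using hvS)
  obtain ⟨j, hjmem, hjmin⟩ := Finset.exists_min_image
    (Finset.univ.filter fun j => j ≠ v ∧ (A' j).card < (A j).card) (pUtil σ f₁ A')
    ⟨j₀, by simp [hj₀v, hj₀]⟩
  simp only [mem_filter, mem_univ, true_and] at hjmem hjmin
  have hjv : pUtil σ f₁ A' j + 1 < pUtil σ f₁ A' v := by
    have h₁ := hjmin j₀ ⟨hj₀v, hj₀⟩
    have h₂ := compare j₀ A' A f₁ f hI' hI hj₀
    have h₃ := compare v A A' f f₁ hI hI' hvA'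
    linarith
  obtain ⟨i, hi, hilt⟩ := hLD'.exists_lt hmrf hI' hD (w := j)
    (by simpa [hjmem.1] using hjmem.2)
  have hiv : i ≠ v := by rintro rfl; linarith
  rw [Function.update_of_ne hiv] at hi
  obtain ⟨k, hkv, hk, hklt⟩ := loser i (by simpa [hiv] using hi)
  have h₁ := hjmin k ⟨hkv, hk⟩
  have h₂ := compare k A' A f₁ f hI' hI hk
  have h₃ := compare i A A' f f₁ hI hI' hi
  linarith
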